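/- For every real number q with 0 < q < 1, ∫_0^q ∏_{j=1}^∞ (1−t^j)^6 (1−t^{6j})^8 / (1−t^{3j})^{10} dt = q ∏_{j=1}^∞ (1−q^j)^3 (1−q^{6j})^9 / ((1−q^{2j})^3 (1−q^{3j})^9). Moreover this common value equals (3√2 − 4)/4 when q = e^{−2π/√6}, equals (√3 − 1)^3/16 when q = e^{−2π/√3}, and equals (√6 − 2)^3/8 when q = e^{−2π/√2}. -/

import Mathlib

open Real

/-- The integrand `∏_{j=1}^∞ (1−t^j)^6 (1−t^{6j})^8 / (1−t^{3j})^{10}`. -/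
noncomputable def U3 (t : ℝ) : ℝ :=
  ∏' j : ℕ, (1 - t ^ (j + 1)) ^ 6 * (1 - t ^ (6 * (j + 1))) ^ 8 / (1 - t ^ (3 * (j + 1))) ^ 10

/-- The antiderivative `q ∏_{j=1}^∞ (1−q^j)^3 (1−q^{6j})^9 / ((1−q^{2j})^3 (1−q^{3j})^9)`. -/
noncomputable def V3 (q : ℝ) : ℝ :=
  q * ∏' j : ℕ, (1 - q ^ (j + 1)) ^ 3 * (1 - q ^ (6 * (j + 1))) ^ 9 /
    ((1 - q ^ (2 * (j + 1))) ^ 3 * (1 - q ^ (3 * (j + 1))) ^ 9)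

/-!
Write `φ_d = ∏_{j ≥ 1} (1 - q ^ (d j))`. The Jacobi triple product turns products of two theta
functions into double series, and comparing these gives Weierstrass's three-term relation; for base
`q ^ 6` and powers of `q` as arguments it reads `1 + V3 = φ₂⁵ φ₆ / (φ₁ φ₃⁵)`. Letting two of its
variables collide gives the factorization of differences of `℘`-values, hence
`φ₁ φ₂ * (M₁ - 2 M₂ - M₃ + 2 M₆) = q φ₃³ φ₆³` for the Lambert series `M_d = -q d/dq log φ_d / d`.

Under the Fricke involution `τ ↦ -1 / (6 τ)`, the transformation law of `η` sends `V3` to `h / 8`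
with `h = φ₁⁹ φ₆³ / (φ₂⁹ φ₃³)`, and `(1 + V3) (1 + h / 8) = 9 / 8`. The second identity computes
the logarithmic derivative of `h`, which through this relation yields `V3' = U3`. At `τ = i / √6`
the involution has a fixed point, so `(1 + V3)² = 9 / 8`; at `τ = i / √3` and `τ = i / √2` the
transformation law evaluates `η(τ) / η(3τ)` and `η(τ) / η(2τ)`, which are algebraic in `V3`.
-/

open Filter Topology

section ResidueClasses

variable {M : Type*} [CommMonoid M] [TopologicalSpace M] [ContinuousMul M] [T3Space M]

@[to_additive]
theorem tprod_eq_prod_tprod_residue (k : ℕ) [NeZero k] {f : ℕ → M} (hf : Multipliable f)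
    (hres : ∀ i : Fin k, Multipliable fun n ↦ f (n * k + i)) :
    ∏' n, f n = ∏ i : Fin k, ∏' n, f (n * k + i) := by
  let e : Fin k × ℕ ≃ ℕ := (Equiv.prodComm _ _).trans (Nat.divModEquiv k).symm
  calc ∏' n, f n = ∏' z, (f ∘ e) z := (e.tprod_eq f).symm
    _ = ∏' i : Fin k, ∏' n, f (n * k + i) := Multipliable.tprod_prod' (e.multipliable_iff.2 hf) hres
    _ = ∏ i : Fin k, ∏' n, f (n * k + i) := tprod_fintype _

end ResidueClasses

section QPochhammer

variable {𝕜 : Type*} [NormedField 𝕜]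

/-- The infinite `q`-Pochhammer symbol `(x; q)_∞ = ∏_{n ≥ 0} (1 - x q ^ n)`. -/
noncomputable def qPochhammer (x q : 𝕜) : 𝕜 := ∏' n : ℕ, (1 - x * q ^ n)

/-- Euler's product `(q; q)_∞ = ∏_{n ≥ 1} (1 - q ^ n)`. -/
noncomputable def eulerProduct (q : 𝕜) : 𝕜 := qPochhammer q q

theorem eulerProduct_eq_tprod (q : 𝕜) : eulerProduct q = ∏' n : ℕ, (1 - q ^ (n + 1)) := by
  simp only [eulerProduct, qPochhammer, pow_succ']

variable {q : 𝕜}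

theorem norm_pow_lt_one (hq : ‖q‖ < 1) {k : ℕ} (hk : k ≠ 0) : ‖q ^ k‖ < 1 := by
  simpa only [norm_pow] using pow_lt_one₀ (norm_nonneg q) hq hk

theorem pow_succ_ne_one_of_norm_lt_one (hq : ‖q‖ < 1) (n : ℕ) : q ^ (n + 1) ≠ 1 := fun h ↦
  (pow_lt_one₀ (norm_nonneg q) hq n.succ_ne_zero).ne (by rw [← norm_pow, h, norm_one])

variable [CompleteSpace 𝕜]

theorem multipliable_qPochhammer (x : 𝕜) (hq : ‖q‖ < 1) :
    Multipliable fun n : ℕ ↦ 1 - x * q ^ n := by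
  simpa only [sub_eq_add_neg] using multipliable_one_add_of_summable
    (f := fun n ↦ -(x * q ^ n))
    (by simpa using (summable_geometric_of_lt_one (norm_nonneg q) hq).mul_left ‖x‖)

theorem multipliable_eulerProduct (hq : ‖q‖ < 1) : Multipliable fun n : ℕ ↦ 1 - q ^ (n + 1) := by
  simpa only [pow_succ'] using multipliable_qPochhammer q hq

theorem qPochhammer_ne_zero {x : 𝕜} (hq : ‖q‖ < 1) (hx : ∀ n : ℕ, x * q ^ n ≠ 1) :
    qPochhammer x q ≠ 0 := by
  simpa only [qPochhammer, sub_eq_add_neg] using tprod_one_add_ne_zero_of_summable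
    (f := fun n ↦ -(x * q ^ n)) (fun n ↦ by simpa [← sub_eq_add_neg, sub_eq_zero] using (hx n).symm)
    (by simpa using (summable_geometric_of_lt_one (norm_nonneg q) hq).mul_left ‖x‖)

theorem eulerProduct_ne_zero (hq : ‖q‖ < 1) : eulerProduct q ≠ 0 :=
  qPochhammer_ne_zero hq fun n ↦ by
    simpa only [pow_succ'] using pow_succ_ne_one_of_norm_lt_one hq n

theorem qPochhammer_eq_prod_residue (x : 𝕜) (hq : ‖q‖ < 1) (k : ℕ) [NeZero k] :
    qPochhammer x q = ∏ i : Fin k, qPochhammer (x * q ^ (i : ℕ)) (q ^ k) := by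
  have hterm : ∀ i n : ℕ, 1 - x * q ^ (n * k + i) = 1 - x * q ^ i * (q ^ k) ^ n := fun i n ↦ by
    ring
  have hres (i : Fin k) : Multipliable fun n ↦ 1 - x * q ^ (n * k + i) := by
    simpa only [hterm] using
      multipliable_qPochhammer (x * q ^ (i : ℕ)) (norm_pow_lt_one hq (NeZero.ne k))
  simpa only [qPochhammer, hterm] using
    tprod_eq_prod_tprod_residue k (multipliable_qPochhammer x hq) hres

end QPochhammer

section TripleProduct

variable {𝕜 : Type*} [NormedField 𝕜]

/-- The general term `p ^ (j choose 2) * x ^ j` of the theta series; the division is exact. -/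
def thetaTerm (p x : 𝕜) (j : ℤ) : 𝕜 := p ^ (j * (j - 1) / 2) * x ^ j

/-- The theta series `∑_{j ∈ ℤ} p ^ (j choose 2) * x ^ j`. -/
noncomputable def thetaSeries (p x : 𝕜) : 𝕜 := ∑' j : ℤ, thetaTerm p x j

/-- The theta product `(x; p)_∞ (p / x; p)_∞`. -/
noncomputable def thetaProduct (p x : 𝕜) : 𝕜 := qPochhammer x p * qPochhammer (p / x) p

theorem thetaTerm_add_one {p x : 𝕜} (hp : p ≠ 0) (hx : x ≠ 0) (j : ℤ) :
    thetaTerm p x (j + 1) = p ^ j * x * thetaTerm p x j := by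
  have hexp : (j + 1) * (j + 1 - 1) / 2 = j + j * (j - 1) / 2 := by
    rw [show (j + 1) * (j + 1 - 1) = j * (j - 1) + j * 2 by ring,
      Int.add_mul_ediv_right _ _ two_ne_zero, add_comm]
  rw [thetaTerm, thetaTerm, hexp, zpow_add₀ hp, zpow_add_one₀ hx]
  ring

theorem thetaTerm_sub_one {p x : 𝕜} (hp : p ≠ 0) (hx : x ≠ 0) (j : ℤ) :
    thetaTerm p x (j - 1) = p / (p ^ j * x) * thetaTerm p x j := by
  have h := thetaTerm_add_one hp hx (j - 1)
  rw [sub_add_cancel, zpow_sub_one₀ hp] at h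
  rw [h]
  field_simp

theorem thetaTerm_neg {p : 𝕜} (hp : p ≠ 0) (x : 𝕜) (j : ℤ) :
    thetaTerm p x (-j) = thetaTerm p (p / x) j := by
  have hexp : -j * (-j - 1) / 2 = j * (j - 1) / 2 + j := by
    rw [show -j * (-j - 1) = j * (j - 1) + j * 2 by ring, Int.add_mul_ediv_right _ _ two_ne_zero]
  rw [thetaTerm, thetaTerm, hexp, zpow_add₀ hp, zpow_neg, div_zpow]
  ring

theorem summable_norm_thetaTerm_natCast {p x : 𝕜} (hp : p ≠ 0) (hp1 : ‖p‖ < 1) (hx : x ≠ 0) :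
    Summable fun n : ℕ ↦ ‖thetaTerm p x n‖ := by
  have hne : ∀ j, thetaTerm p x j ≠ 0 := fun j ↦ mul_ne_zero (zpow_ne_zero _ hp) (zpow_ne_zero _ hx)
  have hratio : Tendsto (fun n : ℕ ↦ ‖p‖ ^ n * ‖x‖) atTop (𝓝 0) := by
    simpa using (tendsto_pow_atTop_nhds_zero_of_lt_one (norm_nonneg p) hp1).mul_const ‖x‖
  refine summable_of_ratio_test_tendsto_lt_one zero_lt_one
    (.of_forall fun n ↦ norm_ne_zero_iff.2 (hne n)) (hratio.congr fun n ↦ ?_)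
  rw [Nat.cast_succ, thetaTerm_add_one hp hx]
  simp [hne]

theorem summable_norm_thetaTerm {p x : 𝕜} (hp : p ≠ 0) (hp1 : ‖p‖ < 1) (hx : x ≠ 0) :
    Summable fun j : ℤ ↦ ‖thetaTerm p x j‖ :=
  .of_nat_of_neg (summable_norm_thetaTerm_natCast hp hp1 hx) <| by
    simpa only [thetaTerm_neg hp x] using
      summable_norm_thetaTerm_natCast hp hp1 (div_ne_zero hp hx)

end TripleProduct

section FiniteTripleProduct

open Finset

variable {𝕜 : Type*} [NormedField 𝕜]

/-- The partial product `(p; p)_n` of Euler's product. -/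
def eulerPartialProduct (p : 𝕜) (n : ℕ) : 𝕜 := ∏ k ∈ range n, (1 - p ^ (k + 1))

/-- The reciprocal `1 / (p; p)_k`, extended by zero to negative `k` so that the recurrence
`eulerPartialProductInv_sub_one` holds for all integers. -/
noncomputable def eulerPartialProductInv (p : 𝕜) : ℤ → 𝕜
  | .ofNat n => (eulerPartialProduct p n)⁻¹
  | .negSucc _ => 0

theorem eulerPartialProductInv_of_neg (p : 𝕜) {k : ℤ} (hk : k < 0) :
    eulerPartialProductInv p k = 0 := by
  obtain ⟨n, rfl⟩ := Int.eq_negSucc_of_lt_zero hk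
  rfl

theorem eulerPartialProduct_succ (p : 𝕜) (n : ℕ) :
    eulerPartialProduct p (n + 1) = eulerPartialProduct p n * (1 - p ^ (n + 1)) :=
  prod_range_succ ..

variable {p x : 𝕜}

theorem eulerPartialProductInv_sub_one (hp1 : ‖p‖ < 1) (k : ℤ) :
    eulerPartialProductInv p (k - 1) = (1 - p ^ k) * eulerPartialProductInv p k := by
  rcases k with (_ | n) | n
  · simp [eulerPartialProductInv_of_neg]
  · have hn : 1 - p ^ (n + 1) ≠ 0 := sub_ne_zero.2 (pow_succ_ne_one_of_norm_lt_one hp1 n).symm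
    rw [Int.ofNat_eq_natCast, Nat.cast_succ, add_sub_cancel_right, ← Nat.cast_succ, zpow_natCast]
    change (eulerPartialProduct p n)⁻¹ = _ * (eulerPartialProduct p (n + 1))⁻¹
    rw [eulerPartialProduct_succ, mul_inv, mul_left_comm, mul_inv_cancel₀ hn, mul_one]
  · rw [eulerPartialProductInv_of_neg p (Int.negSucc_lt_zero n),
      eulerPartialProductInv_of_neg p (by omega), mul_zero]

/-- The general term of the finite triple product, with the Gaussian binomial coefficient
`(p; p)_{2N} / ((p; p)_{N-j} (p; p)_{N+j})` as weight. -/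
noncomputable def finiteThetaTerm (p x : 𝕜) (N : ℕ) (j : ℤ) : 𝕜 :=
  eulerPartialProduct p (2 * N) * eulerPartialProductInv p (N - j) *
    eulerPartialProductInv p (N + j) * thetaTerm p (-x) j

theorem finiteThetaTerm_zero (p x : 𝕜) (j : ℤ) :
    finiteThetaTerm p x 0 j = if j = 0 then 1 else 0 := by
  split_ifs with hj
  · simp [hj, finiteThetaTerm, eulerPartialProduct, thetaTerm,
      show eulerPartialProductInv p 0 = 1 by simp [eulerPartialProductInv, eulerPartialProduct]]
  · rcases lt_or_gt_of_ne hj with hneg | hpos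
    · simp [finiteThetaTerm, eulerPartialProductInv_of_neg p hneg]
    · simp [finiteThetaTerm, eulerPartialProductInv_of_neg p (neg_neg_of_pos hpos)]

theorem finiteThetaTerm_succ (hp : p ≠ 0) (hp1 : ‖p‖ < 1) (hx : x ≠ 0) (N : ℕ) (j : ℤ) :
    finiteThetaTerm p x (N + 1) j = (1 + p ^ (2 * N + 1)) * finiteThetaTerm p x N j -
      x * p ^ N * finiteThetaTerm p x N (j - 1) -
      p ^ (N + 1) / x * finiteThetaTerm p x N (j + 1) := by
  have hrec := eulerPartialProductInv_sub_one hp1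
  have hA : eulerPartialProductInv p (N - j) = (1 - p ^ (N + 1 - j : ℤ)) *
      eulerPartialProductInv p (N + 1 - j) := by
    rw [← hrec]; congr 1; ring
  have hA' : eulerPartialProductInv p (N - (j + 1)) = (1 - p ^ (N - j : ℤ)) *
      eulerPartialProductInv p (N - j) := by
    rw [← hrec]; congr 1; ring
  have hB : eulerPartialProductInv p (N + j) = (1 - p ^ (N + 1 + j : ℤ)) *
      eulerPartialProductInv p (N + 1 + j) := by
    rw [← hrec]; congr 1; ring
  have hB' : eulerPartialProductInv p (N + (j - 1)) = (1 - p ^ (N + j : ℤ)) *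
      eulerPartialProductInv p (N + j) := by
    rw [← hrec]; congr 1; ring
  have hup : thetaTerm p (-x) (j + 1) = p ^ j * -x * thetaTerm p (-x) j :=
    thetaTerm_add_one hp (neg_ne_zero.2 hx) j
  have hdown : thetaTerm p (-x) (j - 1) = p / (p ^ j * -x) * thetaTerm p (-x) j :=
    thetaTerm_sub_one hp (neg_ne_zero.2 hx) j
  have hP : eulerPartialProduct p (2 * (N + 1)) =
      eulerPartialProduct p (2 * N) * (1 - p ^ (2 * N + 1)) * (1 - p ^ (2 * N + 2)) := by
    rw [mul_add_one, eulerPartialProduct_succ, eulerPartialProduct_succ]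
  unfold finiteThetaTerm
  rw [Nat.cast_succ, show (N : ℤ) - (j - 1) = N + 1 - j by ring,
    show (N : ℤ) + (j + 1) = N + 1 + j by ring, hA', hB', hA, hB, hup, hdown, hP]
  simp only [zpow_add₀ hp, zpow_sub₀ hp, zpow_natCast, zpow_one]
  have := zpow_ne_zero j hp
  field_simp
  ring

theorem hasSum_finiteThetaTerm (hp : p ≠ 0) (hp1 : ‖p‖ < 1) (hx : x ≠ 0) (N : ℕ) :
    HasSum (finiteThetaTerm p x N)
      (∏ k ∈ range N, (1 - x * p ^ k) * (1 - p / x * p ^ k)) := by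
  induction N with
  | zero =>
    rw [funext (finiteThetaTerm_zero p x), range_zero, prod_empty]
    exact hasSum_ite_eq 0 1
  | succ N ih =>
    set S := ∏ k ∈ range N, (1 - x * p ^ k) * (1 - p / x * p ^ k)
    have hdown := (Equiv.subRight (1 : ℤ)).hasSum_iff.2 ih
    have hup := (Equiv.addRight (1 : ℤ)).hasSum_iff.2 ih
    have hS : S * ((1 - x * p ^ N) * (1 - p / x * p ^ N)) =
        (1 + p ^ (2 * N + 1)) * S - x * p ^ N * S - p ^ (N + 1) / x * S := by
      field_simp
      ring
    rw [funext (finiteThetaTerm_succ hp hp1 hx N), prod_range_succ, hS]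
    exact ((ih.mul_left _).sub (hdown.mul_left _)).sub (hup.mul_left _)

end FiniteTripleProduct

section TripleProductLimit

variable {𝕜 : Type*} [NormedField 𝕜] [CompleteSpace 𝕜] {p x : 𝕜}

theorem tendsto_eulerPartialProduct (hp1 : ‖p‖ < 1) :
    Tendsto (eulerPartialProduct p) atTop (𝓝 (eulerProduct p)) := by
  rw [eulerProduct_eq_tprod]
  exact (multipliable_eulerProduct hp1).hasProd.tendsto_prod_nat

theorem tendsto_eulerPartialProductInv (hp1 : ‖p‖ < 1) :
    Tendsto (eulerPartialProductInv p) atTop (𝓝 (eulerProduct p)⁻¹) :=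
  Nat.map_cast_int_atTop ▸ tendsto_map'
    ((tendsto_eulerPartialProduct hp1).inv₀ (eulerProduct_ne_zero hp1))

theorem exists_norm_eulerPartialProduct_le (hp1 : ‖p‖ < 1) :
    ∃ C, ∀ n, ‖eulerPartialProduct p n‖ ≤ C := by
  obtain ⟨C, hC⟩ := (tendsto_eulerPartialProduct hp1).norm.bddAbove_range
  exact ⟨C, fun n ↦ hC ⟨n, rfl⟩⟩

theorem exists_norm_eulerPartialProductInv_le (hp1 : ‖p‖ < 1) :
    ∃ C, ∀ k, ‖eulerPartialProductInv p k‖ ≤ C := by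
  obtain ⟨C, hC⟩ :=
    ((tendsto_eulerPartialProduct hp1).inv₀ (eulerProduct_ne_zero hp1)).norm.bddAbove_range
  refine ⟨C, ?_⟩
  rintro (n | n)
  · exact hC ⟨n, rfl⟩
  · simpa [eulerPartialProductInv] using (norm_nonneg _).trans (hC ⟨0, rfl⟩)

theorem tendsto_finiteThetaTerm (hp1 : ‖p‖ < 1) (x : 𝕜) (j : ℤ) :
    Tendsto (fun N ↦ finiteThetaTerm p x N j) atTop
      (𝓝 ((eulerProduct p)⁻¹ * thetaTerm p (-x) j)) := by
  have hcast := tendsto_natCast_atTop_atTop (R := ℤ)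
  have hP := (tendsto_eulerPartialProduct hp1).comp
    (tendsto_id.const_mul_atTop' (two_pos : 0 < (2 : ℕ)))
  have hsub := (tendsto_eulerPartialProductInv hp1).comp
    (tendsto_atTop_add_const_right _ (-j) hcast)
  have hadd := (tendsto_eulerPartialProductInv hp1).comp (tendsto_atTop_add_const_right _ j hcast)
  have h := ((hP.mul hsub).mul hadd).mul_const (thetaTerm p (-x) j)
  rwa [mul_inv_cancel₀ (eulerProduct_ne_zero hp1), one_mul] at h

theorem jacobi_triple_product (hp : p ≠ 0) (hp1 : ‖p‖ < 1) (hx : x ≠ 0) :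
    thetaSeries p (-x) = eulerProduct p * thetaProduct p x := by
  obtain ⟨A, hA⟩ := exists_norm_eulerPartialProduct_le hp1
  obtain ⟨B, hB⟩ := exists_norm_eulerPartialProductInv_le hp1
  have hA0 : 0 ≤ A := (norm_nonneg _).trans (hA 0)
  have hB0 : 0 ≤ B := (norm_nonneg _).trans (hB 0)
  have hbound : ∀ N j, ‖finiteThetaTerm p x N j‖ ≤ A * B * B * ‖thetaTerm p (-x) j‖ := by
    intro N j
    simp only [finiteThetaTerm, norm_mul]
    gcongr <;> apply_rules
  have hsum : Tendsto (fun N ↦ ∑' j, finiteThetaTerm p x N j) atTop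
      (𝓝 (∑' j, (eulerProduct p)⁻¹ * thetaTerm p (-x) j)) :=
    tendsto_tsum_of_dominated_convergence
      ((summable_norm_thetaTerm hp hp1 (neg_ne_zero.2 hx)).mul_left (A * B * B))
      (tendsto_finiteThetaTerm hp1 x) (.of_forall fun N j ↦ hbound N j)
  have hprod : Tendsto (fun N ↦ ∑' j, finiteThetaTerm p x N j) atTop (𝓝 (thetaProduct p x)) := by
    simp only [(hasSum_finiteThetaTerm hp hp1 hx _).tsum_eq, Finset.prod_mul_distrib]
    exact (multipliable_qPochhammer x hp1).hasProd.tendsto_prod_nat.mul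
      (multipliable_qPochhammer (p / x) hp1).hasProd.tendsto_prod_nat
  rw [← tendsto_nhds_unique hsum hprod, tsum_mul_left,
    mul_inv_cancel_left₀ (eulerProduct_ne_zero hp1), thetaSeries]

end TripleProductLimit

section Weierstrass

/-- Pairs of integers split into `(i + j, i - j)` and `(i + j, i - j + 1)` according to the parity
of their sum. -/
def paritySplitEquiv : (ℤ × ℤ) ⊕ (ℤ × ℤ) ≃ ℤ × ℤ where
  toFun := Sum.elim (fun z ↦ (z.1 + z.2, z.1 - z.2)) fun z ↦ (z.1 + z.2, z.1 - z.2 + 1)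
  invFun z := if (z.1 + z.2) % 2 = 0 then .inl ((z.1 + z.2) / 2, (z.1 - z.2) / 2)
    else .inr ((z.1 + z.2) / 2, (z.1 - z.2 + 1) / 2)
  left_inv := by
    rintro (⟨i, j⟩ | ⟨i, j⟩) <;> dsimp only [Sum.elim_inl, Sum.elim_inr]
    · rw [if_pos (by omega)]; congr 2 <;> omega
    · rw [if_neg (by omega)]; congr 2 <;> omega
  right_inv := by
    rintro ⟨m, n⟩
    dsimp only
    split_ifs <;> dsimp only [Sum.elim_inl, Sum.elim_inr] <;> congr 1 <;> omega

variable {𝕜 : Type*} [NormedField 𝕜] {p x y u v : 𝕜}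

theorem thetaTerm_mul_left (p c x : 𝕜) (j : ℤ) :
    thetaTerm p (c * x) j = c ^ j * thetaTerm p x j := by
  rw [thetaTerm, thetaTerm, mul_zpow, mul_left_comm]

theorem thetaTerm_add_mul_thetaTerm_sub (hp : p ≠ 0) (hx : x ≠ 0) (hy : y ≠ 0) (i j : ℤ) :
    thetaTerm p (x * y) (i + j) * thetaTerm p (x / y) (i - j) =
      thetaTerm (p ^ 2) (x ^ 2) i * thetaTerm (p ^ 2) (p * y ^ 2) j := by
  have hdiv (k : ℤ) : 2 * (k * (k - 1) / 2) = k * (k - 1) :=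
    Int.mul_ediv_cancel' (Int.even_mul_pred_self k).two_dvd
  have hp_pow : p ^ ((i + j) * (i + j - 1) / 2) * p ^ ((i - j) * (i - j - 1) / 2) =
      (p ^ 2) ^ (i * (i - 1) / 2) * (p ^ 2) ^ (j * (j - 1) / 2) * p ^ j := by
    have hexp : (i + j) * (i + j - 1) / 2 + (i - j) * (i - j - 1) / 2 =
        i * (i - 1) + j * (j - 1) + j := by
      linarith [hdiv (i + j), hdiv (i - j)]
    simp only [← zpow_natCast, ← zpow_mul, Nat.cast_ofNat, hdiv, ← zpow_add₀ hp, hexp]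
  have hxy_pow : (x * y) ^ (i + j) * (x / y) ^ (i - j) = (x ^ 2) ^ i * (y ^ 2) ^ j := by
    simp only [← zpow_natCast, ← zpow_mul, mul_zpow, div_zpow, zpow_add₀ hx, zpow_add₀ hy,
      zpow_sub₀ hx, zpow_sub₀ hy]
    field_simp
    simp only [Nat.cast_ofNat, two_mul, zpow_add₀ hx, zpow_add₀ hy]
    ring
  simp only [thetaTerm, mul_zpow p]
  linear_combination hp_pow * ((x * y) ^ (i + j) * (x / y) ^ (i - j)) +
    (p ^ 2) ^ (i * (i - 1) / 2) * (p ^ 2) ^ (j * (j - 1) / 2) * p ^ j * hxy_pow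

theorem thetaTerm_add_mul_thetaTerm_sub_add_one (hp : p ≠ 0) (hx : x ≠ 0) (hy : y ≠ 0) (i j : ℤ) :
    thetaTerm p (x * y) (i + j) * thetaTerm p (x / y) (i - j + 1) =
      x / y * (thetaTerm (p ^ 2) (p * x ^ 2) i * thetaTerm (p ^ 2) (y ^ 2) j) := by
  rw [thetaTerm_add_one hp (div_ne_zero hx hy), mul_left_comm,
    thetaTerm_add_mul_thetaTerm_sub hp hx hy, thetaTerm_mul_left, thetaTerm_mul_left,
    zpow_sub₀ hp]
  field [zpow_ne_zero j hp]

variable [CompleteSpace 𝕜]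

theorem hasSum_thetaTerm_mul_thetaTerm {q : 𝕜} (hp : p ≠ 0) (hp1 : ‖p‖ < 1) (hq : q ≠ 0)
    (hq1 : ‖q‖ < 1) (hx : x ≠ 0) (hy : y ≠ 0) :
    HasSum (fun z : ℤ × ℤ ↦ thetaTerm p x z.1 * thetaTerm q y z.2)
      (thetaSeries p x * thetaSeries q y) :=
  have hpx := summable_norm_thetaTerm hp hp1 hx
  have hqy := summable_norm_thetaTerm hq hq1 hy
  hpx.of_norm.hasSum.mul hqy.of_norm.hasSum (summable_mul_of_summable_norm hpx hqy)

theorem thetaSeries_mul_mul_thetaSeries_div (hp : p ≠ 0) (hp1 : ‖p‖ < 1) (hx : x ≠ 0)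
    (hy : y ≠ 0) :
    thetaSeries p (x * y) * thetaSeries p (x / y) =
      thetaSeries (p ^ 2) (x ^ 2) * thetaSeries (p ^ 2) (p * y ^ 2) +
        x / y * (thetaSeries (p ^ 2) (p * x ^ 2) * thetaSeries (p ^ 2) (y ^ 2)) := by
  have hp2 : p ^ 2 ≠ 0 := pow_ne_zero 2 hp
  have hp2' : ‖p ^ 2‖ < 1 := norm_pow_lt_one hp1 two_ne_zero
  have hx2 : x ^ 2 ≠ 0 := pow_ne_zero 2 hx
  have hy2 : y ^ 2 ≠ 0 := pow_ne_zero 2 hy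
  have hall := paritySplitEquiv.hasSum_iff.2
    (hasSum_thetaTerm_mul_thetaTerm hp hp1 hp hp1 (mul_ne_zero hx hy) (div_ne_zero hx hy))
  have heven := hasSum_thetaTerm_mul_thetaTerm hp2 hp2' hp2 hp2' hx2 (mul_ne_zero hp hy2)
  have hodd := (hasSum_thetaTerm_mul_thetaTerm hp2 hp2' hp2 hp2' (mul_ne_zero hp hx2) hy2).mul_left
    (x / y)
  simp only [← thetaTerm_add_mul_thetaTerm_sub hp hx hy] at heven
  simp only [← thetaTerm_add_mul_thetaTerm_sub_add_one hp hx hy] at hodd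
  exact hall.unique (HasSum.sum heven hodd)

theorem thetaProduct_mul_mul_thetaProduct_div (hp : p ≠ 0) (hp1 : ‖p‖ < 1) (hx : x ≠ 0)
    (hy : y ≠ 0) :
    eulerProduct p ^ 2 * (thetaProduct p (x * y) * thetaProduct p (x / y)) =
      thetaSeries (p ^ 2) (x ^ 2) * thetaSeries (p ^ 2) (p * y ^ 2) -
        x / y * (thetaSeries (p ^ 2) (p * x ^ 2) * thetaSeries (p ^ 2) (y ^ 2)) := by
  have h := thetaSeries_mul_mul_thetaSeries_div hp hp1 (neg_ne_zero.2 hx) hy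
  rw [neg_mul, neg_div, jacobi_triple_product hp hp1 (mul_ne_zero hx hy),
    jacobi_triple_product hp hp1 (div_ne_zero hx hy), neg_sq] at h
  linear_combination h

/-- By the product formula each theta factor is a `2 × 2` minor, and the identity is the
Plücker relation between these minors. -/
theorem weierstrass_thetaProduct (hp : p ≠ 0) (hp1 : ‖p‖ < 1) (hx : x ≠ 0) (hy : y ≠ 0)
    (hu : u ≠ 0) (hv : v ≠ 0) :
    y * (thetaProduct p (x * y) * thetaProduct p (x / y)) *
        (thetaProduct p (u * v) * thetaProduct p (u / v)) +
      u * (thetaProduct p (x * v) * thetaProduct p (x / v)) *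
        (thetaProduct p (y * u) * thetaProduct p (y / u)) =
      u * (thetaProduct p (x * u) * thetaProduct p (x / u)) *
        (thetaProduct p (y * v) * thetaProduct p (y / v)) := by
  have hφ : eulerProduct p ^ 2 ≠ 0 := pow_ne_zero 2 (eulerProduct_ne_zero hp1)
  have hprod {a b : 𝕜} (ha : a ≠ 0) (hb : b ≠ 0) :=
    eq_div_of_mul_eq hφ ((mul_comm _ _).trans (thetaProduct_mul_mul_thetaProduct_div hp hp1 ha hb))
  rw [hprod hx hy, hprod hu hv, hprod hx hv, hprod hy hu, hprod hx hu, hprod hy hv]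
  field

end Weierstrass

section Confluence

section Field

variable {𝕜 : Type*} [NormedField 𝕜]

/-- The Koebe function `a / (1 - a) ^ 2 = ∑_{n ≥ 1} n a ^ n`. -/
def koebe (a : 𝕜) : 𝕜 := a / (1 - a) ^ 2

/-- The series `∑_{n ≥ 0} koebe (x q ^ n)`; symmetrized under `x ↦ q / x` it is Weierstrass's
`℘`-function up to an additive constant. -/
noncomputable def koebeSum (x q : 𝕜) : 𝕜 := ∑' n : ℕ, koebe (x * q ^ n)

/-- The product `∏_{n ≥ 0} (1 - ε * koebe (x q ^ n))`, which for `ε = s + s⁻¹ - 2` measures the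
change of `(x; q)_∞ ^ 2` into `(x s; q)_∞ (x / s; q)_∞`. -/
noncomputable def koebeProduct (x q ε : 𝕜) : 𝕜 := ∏' n : ℕ, (1 - ε * koebe (x * q ^ n))

theorem koebeProduct_zero (x q : 𝕜) : koebeProduct x q 0 = 1 := by
  simp [koebeProduct]

theorem one_sub_mul_mul_one_sub_div {a s : 𝕜} (ha : a ≠ 1) (hs : s ≠ 0) :
    (1 - a * s) * (1 - a / s) = (1 - a) ^ 2 * (1 - (s + s⁻¹ - 2) * koebe a) := by
  have : 1 - a ≠ 0 := sub_ne_zero.2 ha.symm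
  unfold koebe
  field

theorem div_mul_pow_ne_one {p x : 𝕜} (hp : p ≠ 0) (hx : ∀ n : ℤ, x * p ^ n ≠ 1) (n : ℕ) :
    p / x * p ^ n ≠ 1 := fun h ↦ hx (-(n + 1)) <| by
  have hx0 : x ≠ 0 := fun hx0 ↦ by simp [hx0] at h
  rw [zpow_neg, ← Nat.cast_succ, zpow_natCast, pow_succ']
  field_simp at h ⊢
  exact h.symm

variable {p q x y s : 𝕜}

theorem summable_norm_koebe (x : 𝕜) (hq : ‖q‖ < 1) :
    Summable fun n : ℕ ↦ ‖koebe (x * q ^ n)‖ := by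
  have hzero : Tendsto (fun n : ℕ ↦ x * q ^ n) atTop (𝓝 0) := by
    simpa using (tendsto_pow_atTop_nhds_zero_of_norm_lt_one hq).const_mul x
  have hone : Tendsto (fun n : ℕ ↦ ((1 - x * q ^ n) ^ 2)⁻¹) atTop (𝓝 1) := by
    simpa using ((hzero.const_sub 1).pow 2).inv₀ (by simp)
  obtain ⟨C, hC⟩ := hone.norm.bddAbove_range
  refine .of_nonneg_of_le (fun _ ↦ norm_nonneg _) (fun n ↦ ?_)
    (((summable_geometric_of_lt_one (norm_nonneg q) hq).mul_left ‖x‖).mul_right C)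
  rw [koebe, div_eq_mul_inv, norm_mul, norm_mul, norm_pow]
  gcongr
  exact hC ⟨n, rfl⟩

variable [CompleteSpace 𝕜]

theorem multipliable_koebeProduct (x ε : 𝕜) (hq : ‖q‖ < 1) :
    Multipliable fun n : ℕ ↦ 1 - ε * koebe (x * q ^ n) := by
  simpa only [sub_eq_add_neg] using multipliable_one_add_of_summable
    (f := fun n ↦ -(ε * koebe (x * q ^ n))) (by simpa using (summable_norm_koebe x hq).mul_left ‖ε‖)

theorem koebeSum_eq_sum_residue (x : 𝕜) (hq : ‖q‖ < 1) (k : ℕ) [NeZero k] :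
    koebeSum x q = ∑ i : Fin k, koebeSum (x * q ^ (i : ℕ)) (q ^ k) := by
  have hterm : ∀ i n : ℕ, x * q ^ (n * k + i) = x * q ^ i * (q ^ k) ^ n := fun i n ↦ by ring
  simpa only [koebeSum, hterm] using
    tsum_eq_sum_tsum_residue k (summable_norm_koebe x hq).of_norm fun i ↦ by
      simpa only [hterm] using
        (summable_norm_koebe (x * q ^ (i : ℕ)) (norm_pow_lt_one hq (NeZero.ne k))).of_norm

theorem qPochhammer_mul_mul_qPochhammer_div (hq : ‖q‖ < 1) (hx : ∀ n : ℕ, x * q ^ n ≠ 1)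
    (hs : s ≠ 0) :
    qPochhammer (x * s) q * qPochhammer (x / s) q =
      qPochhammer x q ^ 2 * koebeProduct x q (s + s⁻¹ - 2) := by
  have hx' := multipliable_qPochhammer x hq
  rw [qPochhammer, qPochhammer, qPochhammer, koebeProduct, ← hx'.tprod_pow,
    ← (hx'.pow 2).tprod_mul (multipliable_koebeProduct x _ hq),
    ← (multipliable_qPochhammer _ hq).tprod_mul (multipliable_qPochhammer _ hq)]
  refine tprod_congr fun n ↦ ?_
  rw [← one_sub_mul_mul_one_sub_div (hx n) hs]
  ring

theorem qPochhammer_eq_one_sub_mul (x : 𝕜) (hq : ‖q‖ < 1) :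
    qPochhammer x q = (1 - x) * qPochhammer (q * x) q := by
  have hterm (n : ℕ) : 1 - x * q ^ (n + 1) = 1 - q * x * q ^ n := by ring
  rw [qPochhammer, tprod_eq_zero_mul', pow_zero, mul_one]
  · simp only [hterm, qPochhammer]
  · simpa only [hterm] using multipliable_qPochhammer (q * x) hq

theorem thetaProduct_mul_mul_thetaProduct_div_eq_koebeProduct (hp : p ≠ 0) (hp1 : ‖p‖ < 1)
    (hx : ∀ n : ℤ, x * p ^ n ≠ 1) (hs : s ≠ 0) :
    thetaProduct p (x * s) * thetaProduct p (x / s) = thetaProduct p x ^ 2 *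
      (koebeProduct x p (s + s⁻¹ - 2) * koebeProduct (p / x) p (s + s⁻¹ - 2)) := by
  have h₁ := qPochhammer_mul_mul_qPochhammer_div hp1 (fun n ↦ mod_cast hx n) hs
  have h₂ := qPochhammer_mul_mul_qPochhammer_div hp1 (div_mul_pow_ne_one hp hx) hs
  rw [thetaProduct, thetaProduct, thetaProduct, ← div_div p x s, ← div_mul p x s]
  linear_combination h₁ * (qPochhammer (p / x * s) p * qPochhammer (p / x / s) p) +
    qPochhammer x p ^ 2 * koebeProduct x p (s + s⁻¹ - 2) * h₂

theorem thetaProduct_eq_koebeProduct (hp1 : ‖p‖ < 1) (hs : s ≠ 0) :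
    thetaProduct p s = (1 - s) * (eulerProduct p ^ 2 * koebeProduct p p (s + s⁻¹ - 2)) := by
  rw [thetaProduct, qPochhammer_eq_one_sub_mul s hp1, mul_assoc, eulerProduct,
    ← qPochhammer_mul_mul_qPochhammer_div hp1 (fun n ↦ ?_) hs]
  simpa only [pow_succ'] using pow_succ_ne_one_of_norm_lt_one hp1 n

theorem weierstrass_koebeProduct (hp : p ≠ 0) (hp1 : ‖p‖ < 1) (hx0 : x ≠ 0) (hy0 : y ≠ 0)
    (hx : ∀ n : ℤ, x * p ^ n ≠ 1) (hy : ∀ n : ℤ, y * p ^ n ≠ 1) {ε : 𝕜} (hs : s ≠ 0)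
    (hε : s + s⁻¹ - 2 = ε) :
    y * thetaProduct p (x * y) * thetaProduct p (x / y) * eulerProduct p ^ 4 *
        (ε * koebeProduct p p ε ^ 2) =
      thetaProduct p x ^ 2 * thetaProduct p y ^ 2 *
        (koebeProduct x p ε * koebeProduct (p / x) p ε -
          koebeProduct y p ε * koebeProduct (p / y) p ε) := by
  have hsε : (1 - s) ^ 2 = s * ε := by
    rw [← hε]
    field
  have h := weierstrass_thetaProduct hp hp1 hx0 hy0 hs one_ne_zero
  rw [thetaProduct_mul_mul_thetaProduct_div_eq_koebeProduct hp hp1 hx hs,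
    thetaProduct_mul_mul_thetaProduct_div_eq_koebeProduct hp hp1 hy hs, mul_one, div_one,
    mul_one, div_one, mul_one, div_one, thetaProduct_eq_koebeProduct hp1 hs, hε] at h
  refine mul_left_cancel₀ hs ?_
  linear_combination h - y * thetaProduct p (x * y) * thetaProduct p (x / y) *
    eulerProduct p ^ 4 * koebeProduct p p ε ^ 2 * hsε

end Field

theorem hasDerivAt_tprod {ι : Type*} {f f' : ι → ℝ → ℝ} {t : Set ℝ} {u : ι → ℝ} {y₀ y : ℝ}
    (hu : Summable u) (ht : IsOpen t) (h't : IsPreconnected t)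
    (hf : ∀ i, ∀ z ∈ t, HasDerivAt (f i) (f' i z) z) (hpos : ∀ i, ∀ z ∈ t, 0 < f i z)
    (hbound : ∀ i, ∀ z ∈ t, ‖f' i z / f i z‖ ≤ u i) (hy₀ : y₀ ∈ t)
    (hlog : Summable fun i ↦ log (f i y₀)) (hy : y ∈ t) :
    HasDerivAt (fun z ↦ ∏' i, f i z) ((∏' i, f i y) * ∑' i, f' i y / f i y) y := by
  have hderiv : ∀ i, ∀ z ∈ t, HasDerivAt (fun z ↦ log (f i z)) (f' i z / f i z) z :=
    fun i z hz ↦ (hf i z hz).log (hpos i z hz).ne'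
  have hexp : ∀ z ∈ t, exp (∑' i, log (f i z)) = ∏' i, f i z := fun z hz ↦
    rexp_tsum_eq_tprod (hpos · z hz) (summable_of_summable_hasDerivAt_of_isPreconnected hu ht h't
      hderiv hbound hy₀ hlog hz)
  rw [← hexp y hy]
  have h := (hasDerivAt_tsum_of_isPreconnected hu ht h't hderiv hbound hy₀ hlog hy).exp
  exact h.congr_of_eventuallyEq (eventually_of_mem (ht.mem_nhds hy) fun z hz ↦ (hexp z hz).symm)

theorem hasDerivAt_tprod_one_sub_mul {ι : Type*} {c : ι → ℝ} (hc : Summable c) :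
    HasDerivAt (fun ε ↦ ∏' i, (1 - ε * c i)) (-∑' i, c i) 0 := by
  set C := 2 * (∑' i, |c i| + 1)
  have hC : 0 < C := by
    have : 0 ≤ ∑' i, |c i| := tsum_nonneg fun i ↦ abs_nonneg _
    positivity
  have hhalf : ∀ i, ∀ ε ∈ Set.Ioo (-C⁻¹) C⁻¹, 1 / 2 ≤ 1 - ε * c i := by
    intro i ε hε
    have hci : |c i| ≤ C / 2 := by
      have := hc.abs.le_tsum i fun j _ ↦ abs_nonneg (c j)
      simp only [C]
      linarith
    have : ε * c i ≤ 1 / 2 :=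
      calc ε * c i ≤ |ε| * |c i| := (le_abs_self _).trans (abs_mul _ _).le
        _ ≤ C⁻¹ * (C / 2) := by gcongr; exact (abs_lt.2 hε).le
        _ = 1 / 2 := by field
    linarith
  have h := hasDerivAt_tprod (f := fun i ε ↦ 1 - ε * c i) (f' := fun i _ ↦ -c i) (y₀ := 0) (y := 0)
    (hc.abs.mul_left 2) isOpen_Ioo isPreconnected_Ioo (t := Set.Ioo (-C⁻¹) C⁻¹)
    (fun i ε _ ↦ by simpa using ((hasDerivAt_id ε).mul_const (c i)).const_sub 1)
    (fun i ε hε ↦ by linarith [hhalf i ε hε])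
    (fun i ε hε ↦ by
      have hpos := hhalf i ε hε
      rw [norm_div, norm_neg, norm_eq_abs, norm_eq_abs, div_le_iff₀ (by positivity),
        abs_of_pos (a := 1 - ε * c i) (by linarith)]
      nlinarith [abs_nonneg (c i)])
    (by simpa using hC) (by simp) (by simpa using hC)
  simpa [tsum_neg] using h

section Real

variable {p q x y : ℝ}

theorem hasDerivAt_koebeProduct_zero (x : ℝ) (hq : ‖q‖ < 1) :
    HasDerivAt (koebeProduct x q) (-koebeSum x q) 0 :=
  hasDerivAt_tprod_one_sub_mul (summable_norm_koebe x hq).of_norm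

theorem exists_add_inv_sub_two_eq {ε : ℝ} (hε : 0 ≤ ε) : ∃ s : ℝ, s ≠ 0 ∧ s + s⁻¹ - 2 = ε := by
  have hsq := sq_sqrt (show 0 ≤ ε ^ 2 + 4 * ε by positivity)
  have hs : 2 + ε + √(ε ^ 2 + 4 * ε) ≠ 0 := by positivity
  refine ⟨(2 + ε + √(ε ^ 2 + 4 * ε)) / 2, by positivity, ?_⟩
  generalize √(ε ^ 2 + 4 * ε) = w at hsq hs
  field_simp
  linear_combination hsq

/-- The derivative of `weierstrass_koebeProduct` at `ε = 0`. -/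
theorem thetaProduct_mul_koebeSum_sub (hp : p ≠ 0) (hp1 : ‖p‖ < 1) (hx0 : x ≠ 0) (hy0 : y ≠ 0)
    (hx : ∀ n : ℤ, x * p ^ n ≠ 1) (hy : ∀ n : ℤ, y * p ^ n ≠ 1) :
    y * thetaProduct p (x * y) * thetaProduct p (x / y) * eulerProduct p ^ 4 =
      thetaProduct p x ^ 2 * thetaProduct p y ^ 2 *
        (koebeSum y p + koebeSum (p / y) p - (koebeSum x p + koebeSum (p / x) p)) := by
  have hd (z : ℝ) := (hasDerivAt_koebeProduct_zero z hp1).hasDerivWithinAt (s := Set.Ici 0)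
  have hleft := ((hasDerivWithinAt_id 0 (Set.Ici 0)).mul ((hd p).pow 2)).const_mul
    (y * thetaProduct p (x * y) * thetaProduct p (x / y) * eulerProduct p ^ 4)
  have hright := (((hd x).mul (hd (p / x))).sub ((hd y).mul (hd (p / y)))).const_mul
    (thetaProduct p x ^ 2 * thetaProduct p y ^ 2)
  have heq := UniqueDiffWithinAt.eq_deriv _ (uniqueDiffOn_Ici (0 : ℝ) 0 Set.self_mem_Ici) hleft
    (hright.congr_of_mem (fun ε hε ↦ by
      obtain ⟨s, hs, hsε⟩ := exists_add_inv_sub_two_eq hε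
      exact weierstrass_koebeProduct hp hp1 hx0 hy0 hx hy hs hsε) Set.self_mem_Ici)
  simp only [koebeProduct_zero, Pi.pow_apply, id_eq] at heq
  linear_combination heq

end Real

end Confluence

section EulerDerivative

variable {q : ℝ}

theorem eulerProduct_pos (hq : ‖q‖ < 1) : 0 < eulerProduct q := by
  have hlt (n : ℕ) : q ^ (n + 1) < 1 :=
    (le_abs_self _).trans_lt (norm_pow_lt_one hq n.succ_ne_zero)
  refine lt_of_le_of_ne ?_ (eulerProduct_ne_zero hq).symm
  rw [eulerProduct_eq_tprod]
  exact ge_of_tendsto' (multipliable_eulerProduct hq).hasProd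
    fun s ↦ Finset.prod_nonneg fun n _ ↦ (sub_pos.2 (hlt n)).le

theorem tsum_mul_pow_div_one_sub_pow (hq : ‖q‖ < 1) :
    ∑' n : ℕ, (n + 1 : ℝ) * q ^ (n + 1) / (1 - q ^ (n + 1)) = koebeSum q q := by
  have hkoebe (d : ℕ+) : ∑' c : ℕ+, (c : ℝ) ^ 1 * q ^ (d * c : ℕ) = koebe (q ^ (d : ℕ)) := by
    have hd : ‖q ^ (d : ℕ)‖ < 1 := norm_pow_lt_one hq d.ne_zero
    rw [koebe, ← tsum_coe_mul_geometric_of_norm_lt_one hd, ← tsum_zero_pnat_eq_tsum_nat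
      (by simpa using summable_pow_mul_geometric_of_norm_lt_one 1 hd)]
    simp [pow_mul]
  have h := (tsum_pow_div_one_sub_eq_tsum_sigma hq 1).trans (tsum_prod_pow_eq_tsum_sigma 1 hq).symm
  simp only [hkoebe] at h
  simp only [pow_one] at h
  rw [tsum_pnat_eq_tsum_succ (f := fun n : ℕ ↦ n * q ^ n / (1 - q ^ n)),
    tsum_pnat_eq_tsum_succ (f := fun n : ℕ ↦ koebe (q ^ n))] at h
  simpa only [koebeSum, Nat.cast_succ, pow_succ'] using h

theorem hasDerivAt_eulerProduct (hq : ‖q‖ < 1) :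
    HasDerivAt eulerProduct
      (eulerProduct q * ∑' n : ℕ, -((n + 1) * q ^ n) / (1 - q ^ (n + 1))) q := by
  obtain ⟨r, hqr, hr1⟩ := exists_between hq
  have hr0 : 0 < r := (norm_nonneg q).trans_lt hqr
  have hbd : ∀ n : ℕ, ∀ z ∈ Set.Ioo (-r) r, 1 - r ≤ 1 - z ^ (n + 1) := by
    intro n z hz
    have hz' : |z| ≤ r := (abs_lt.2 hz).le
    have : z ^ (n + 1) ≤ r :=
      calc z ^ (n + 1) ≤ |z| ^ (n + 1) := (le_abs_self _).trans (abs_pow _ _).le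
        _ ≤ |z| := pow_le_of_le_one (abs_nonneg z) (hz'.trans hr1.le) n.succ_ne_zero
        _ ≤ r := hz'
    linarith
  have hpos : ∀ n : ℕ, ∀ z ∈ Set.Ioo (-r) r, 0 < 1 - z ^ (n + 1) :=
    fun n z hz ↦ (sub_pos.2 hr1).trans_le (hbd n z hz)
  have hsum : Summable fun n : ℕ ↦ (n + 1 : ℝ) * r ^ n / (1 - r) := by
    have hr : ‖r‖ < 1 := by rwa [norm_of_nonneg hr0.le]
    simpa [add_mul] using ((summable_pow_mul_geometric_of_norm_lt_one 1 hr).add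
      (summable_geometric_of_norm_lt_one hr)).div_const (1 - r)
  simp only [funext eulerProduct_eq_tprod]
  refine hasDerivAt_tprod (f := fun (n : ℕ) z ↦ 1 - z ^ (n + 1))
    (f' := fun (n : ℕ) z ↦ -((n + 1) * z ^ n)) (y₀ := 0) hsum isOpen_Ioo isPreconnected_Ioo
    (fun n z _ ↦ ?_) hpos (fun n z hz ↦ ?_) (by simpa using hr0) (by simp) (abs_lt.1 hqr)
  · simpa using (hasDerivAt_pow (n + 1) z).const_sub 1
  · rw [norm_div, norm_neg, norm_mul, norm_pow, norm_of_nonneg (by positivity : (0 : ℝ) ≤ n + 1),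
      norm_of_nonneg (hpos n z hz).le]
    have := hbd n z hz
    have := sub_pos.2 hr1
    gcongr
    exact (abs_lt.2 hz).le

theorem hasDerivAt_eulerProduct_koebeSum (hq : ‖q‖ < 1) (hq0 : q ≠ 0) :
    HasDerivAt eulerProduct (-(eulerProduct q * koebeSum q q / q)) q := by
  convert hasDerivAt_eulerProduct hq using 1
  rw [← tsum_mul_pow_div_one_sub_pow hq, mul_div_assoc, ← mul_neg, ← tsum_div_const, ← tsum_neg]
  congr 1
  refine tsum_congr fun n ↦ ?_
  field

theorem hasDerivAt_eulerProduct_pow {d : ℕ} (hd : d ≠ 0) (hq : ‖q‖ < 1) (hq0 : q ≠ 0) :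
    HasDerivAt (fun z ↦ eulerProduct (z ^ d))
      (-(d * eulerProduct (q ^ d) * koebeSum (q ^ d) (q ^ d) / q)) q := by
  obtain ⟨m, rfl⟩ := Nat.exists_eq_succ_of_ne_zero hd
  have h := hasDerivAt_eulerProduct_koebeSum (norm_pow_lt_one hq hd) (pow_ne_zero (m + 1) hq0)
  refine (HasDerivAt.comp (h := fun z ↦ z ^ (m + 1)) q h (hasDerivAt_pow (m + 1) q)).congr_deriv ?_
  rw [Nat.add_sub_cancel, Nat.succ_eq_add_one]
  field

end EulerDerivative

section LevelSix

section Field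

variable {𝕜 : Type*} [NormedField 𝕜] {p q x : 𝕜}

theorem thetaProduct_div_self (hp : p ≠ 0) (x : 𝕜) : thetaProduct p (p / x) = thetaProduct p x := by
  rw [thetaProduct, thetaProduct, div_div_cancel₀ hp, mul_comm]

variable [CompleteSpace 𝕜]

theorem eulerProduct_pow_eq_prod_residue (hq : ‖q‖ < 1) (d k : ℕ) [NeZero d] [NeZero k] :
    eulerProduct (q ^ d) = ∏ i : Fin k, qPochhammer (q ^ (d * (i + 1))) (q ^ (d * k)) := by
  rw [eulerProduct, qPochhammer_eq_prod_residue _ (norm_pow_lt_one hq (NeZero.ne d)) k]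
  refine Finset.prod_congr rfl fun i _ ↦ ?_
  ring_nf

theorem eulerProduct_sq_eq_residues_six (hq : ‖q‖ < 1) :
    eulerProduct (q ^ 2) = qPochhammer (q ^ 2) (q ^ 6) * qPochhammer (q ^ 4) (q ^ 6) *
      eulerProduct (q ^ 6) := by
  simpa [Fin.prod_univ_three, eulerProduct] using eulerProduct_pow_eq_prod_residue hq 2 3

theorem eulerProduct_cube_eq_residues_six (hq : ‖q‖ < 1) :
    eulerProduct (q ^ 3) = qPochhammer (q ^ 3) (q ^ 6) * eulerProduct (q ^ 6) := by
  simpa [eulerProduct] using eulerProduct_pow_eq_prod_residue hq 3 2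

theorem eulerProduct_eq_residues_six (hq : ‖q‖ < 1) :
    eulerProduct q = qPochhammer q (q ^ 6) * qPochhammer (q ^ 2) (q ^ 6) *
      qPochhammer (q ^ 3) (q ^ 6) * qPochhammer (q ^ 4) (q ^ 6) * qPochhammer (q ^ 5) (q ^ 6) *
      eulerProduct (q ^ 6) := by
  simpa [Fin.prod_univ_six, eulerProduct] using eulerProduct_pow_eq_prod_residue hq 1 6

theorem thetaProduct_six_self_mul (hq0 : q ≠ 0) (hq : ‖q‖ < 1) :
    thetaProduct (q ^ 6) q * (eulerProduct (q ^ 2) * eulerProduct (q ^ 3)) =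
      eulerProduct q * eulerProduct (q ^ 6) := by
  rw [eulerProduct_eq_residues_six hq, eulerProduct_sq_eq_residues_six hq,
    eulerProduct_cube_eq_residues_six hq, thetaProduct, show q ^ 6 / q = q ^ 5 by field]
  ring

theorem thetaProduct_six_sq_mul (hq0 : q ≠ 0) (hq : ‖q‖ < 1) :
    thetaProduct (q ^ 6) (q ^ 2) * eulerProduct (q ^ 6) = eulerProduct (q ^ 2) := by
  rw [eulerProduct_sq_eq_residues_six hq, thetaProduct, show q ^ 6 / q ^ 2 = q ^ 4 by field]

theorem thetaProduct_six_cube_mul (hq0 : q ≠ 0) (hq : ‖q‖ < 1) :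
    thetaProduct (q ^ 6) (q ^ 3) * eulerProduct (q ^ 6) ^ 2 = eulerProduct (q ^ 3) ^ 2 := by
  rw [eulerProduct_cube_eq_residues_six hq, thetaProduct, show q ^ 6 / q ^ 3 = q ^ 3 by field]
  ring

theorem weierstrass_thetaProduct_six (hq0 : q ≠ 0) (hq : ‖q‖ < 1) :
    q * thetaProduct (q ^ 6) q ^ 4 + thetaProduct (q ^ 6) (q ^ 3) ^ 3 * thetaProduct (q ^ 6) q =
      thetaProduct (q ^ 6) (q ^ 2) ^ 4 := by
  have hp : q ^ 6 ≠ 0 := pow_ne_zero 6 hq0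
  have hfive : thetaProduct (q ^ 6) (q ^ 5) = thetaProduct (q ^ 6) q := by
    rw [← thetaProduct_div_self hp q]
    congr 1
    field
  have hfour : thetaProduct (q ^ 6) (q ^ 4) = thetaProduct (q ^ 6) (q ^ 2) := by
    rw [← thetaProduct_div_self hp (q ^ 2)]
    congr 1
    field
  have h := weierstrass_thetaProduct hp (norm_pow_lt_one hq (by norm_num)) (pow_ne_zero 3 hq0)
    (pow_ne_zero 2 hq0) hq0 one_ne_zero
  rw [show q ^ 3 * q ^ 2 = q ^ 5 by ring, show q ^ 3 / q ^ 2 = q by field,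
    show q ^ 2 * q = q ^ 3 by ring, show q ^ 2 / q = q by field, show q ^ 3 * q = q ^ 4 by ring,
    show q ^ 3 / q = q ^ 2 by field, hfive, hfour] at h
  simp only [mul_one, div_one] at h
  exact mul_left_cancel₀ hq0 (by linear_combination h)

theorem eulerProduct_level_six (hq0 : q ≠ 0) (hq : ‖q‖ < 1) :
    q * eulerProduct q ^ 4 * eulerProduct (q ^ 6) ^ 9 +
        eulerProduct q * eulerProduct (q ^ 2) ^ 3 * eulerProduct (q ^ 3) ^ 9 =
      eulerProduct (q ^ 2) ^ 8 * eulerProduct (q ^ 3) ^ 4 * eulerProduct (q ^ 6) := by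
  have h₂ := eulerProduct_ne_zero (norm_pow_lt_one hq two_ne_zero)
  have h₃ := eulerProduct_ne_zero (norm_pow_lt_one hq three_ne_zero)
  have h₆ := eulerProduct_ne_zero (norm_pow_lt_one hq (k := 6) (by norm_num))
  have h := weierstrass_thetaProduct_six hq0 hq
  rw [eq_div_of_mul_eq (mul_ne_zero h₂ h₃) (thetaProduct_six_self_mul hq0 hq),
    eq_div_of_mul_eq h₆ (thetaProduct_six_sq_mul hq0 hq),
    eq_div_of_mul_eq (pow_ne_zero 2 h₆) (thetaProduct_six_cube_mul hq0 hq)] at h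
  field_simp at h
  linear_combination h

end Field

section Real

variable {q : ℝ}

theorem koebeSum_pow_eq_sum_residue (hq : ‖q‖ < 1) (d k : ℕ) [NeZero d] [NeZero k] :
    koebeSum (q ^ d) (q ^ d) = ∑ i : Fin k, koebeSum (q ^ (d * (i + 1))) (q ^ (d * k)) := by
  rw [koebeSum_eq_sum_residue _ (norm_pow_lt_one hq (NeZero.ne d)) k]
  refine Finset.sum_congr rfl fun i _ ↦ ?_
  ring_nf

theorem koebeSum_level_six (hq : ‖q‖ < 1) :
    koebeSum q q - 2 * koebeSum (q ^ 2) (q ^ 2) - koebeSum (q ^ 3) (q ^ 3) +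
        2 * koebeSum (q ^ 6) (q ^ 6) =
      koebeSum q (q ^ 6) + koebeSum (q ^ 5) (q ^ 6) -
        (koebeSum (q ^ 2) (q ^ 6) + koebeSum (q ^ 4) (q ^ 6)) := by
  have hone := koebeSum_pow_eq_sum_residue hq 1 6
  have htwo := koebeSum_pow_eq_sum_residue hq 2 3
  have hthree := koebeSum_pow_eq_sum_residue hq 3 2
  simp only [Fin.sum_univ_succ, Fin.sum_univ_zero, Fin.val_zero, Fin.val_succ, Nat.reduceAdd,
    Nat.reduceMul, pow_one, add_zero] at hone htwo hthree
  rw [hone, htwo, hthree]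
  ring

theorem eulerProduct_mul_koebeSum_level_six (hq0 : q ≠ 0) (hq : ‖q‖ < 1) :
    (koebeSum q q - 2 * koebeSum (q ^ 2) (q ^ 2) - koebeSum (q ^ 3) (q ^ 3) +
        2 * koebeSum (q ^ 6) (q ^ 6)) * (eulerProduct q * eulerProduct (q ^ 2)) =
      q * eulerProduct (q ^ 3) ^ 3 * eulerProduct (q ^ 6) ^ 3 := by
  have hpow {m : ℕ} (hm : ¬ 6 ∣ m) (n : ℤ) : q ^ m * (q ^ 6) ^ n ≠ 1 := by
    rw [← zpow_natCast, ← zpow_natCast q 6, ← zpow_mul, ← zpow_add₀ hq0]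
    intro h
    have hnorm : ‖q‖ ^ (m + (6 : ℕ) * n : ℤ) = 1 := by rw [← norm_zpow, h, norm_one]
    rw [zpow_eq_one_iff_right₀ (norm_nonneg q) hq.ne] at hnorm
    omega
  have h := thetaProduct_mul_koebeSum_sub (pow_ne_zero 6 hq0) (norm_pow_lt_one hq (by norm_num))
    (pow_ne_zero 2 hq0) (pow_ne_zero 1 hq0) (hpow (by norm_num)) (hpow (by norm_num))
  have h₁ := eulerProduct_ne_zero hq
  have h₂ := eulerProduct_ne_zero (norm_pow_lt_one hq two_ne_zero)
  have h₃ := eulerProduct_ne_zero (norm_pow_lt_one hq three_ne_zero)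
  have h₆ := eulerProduct_ne_zero (norm_pow_lt_one hq (k := 6) (by norm_num))
  rw [koebeSum_level_six hq]
  rw [pow_one, show q ^ 2 * q = q ^ 3 by ring, show q ^ 2 / q = q by field,
    show q ^ 6 / q = q ^ 5 by field, show q ^ 6 / q ^ 2 = q ^ 4 by field,
    eq_div_of_mul_eq (mul_ne_zero h₂ h₃) (thetaProduct_six_self_mul hq0 hq),
    eq_div_of_mul_eq h₆ (thetaProduct_six_sq_mul hq0 hq),
    eq_div_of_mul_eq (pow_ne_zero 2 h₆) (thetaProduct_six_cube_mul hq0 hq)] at h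
  field_simp at h
  linear_combination -h

end Real

end LevelSix

section EtaQuotients

variable {q : ℝ}

theorem hasProd_one_sub_pow_pow (hq : ‖q‖ < 1) {d : ℕ} (hd : d ≠ 0) (k : ℕ) :
    HasProd (fun j : ℕ ↦ (1 - q ^ (d * (j + 1))) ^ k) (eulerProduct (q ^ d) ^ k) := by
  simpa only [eulerProduct_eq_tprod, ← pow_mul, Function.comp_def, powMonoidHom_apply] using
    (multipliable_eulerProduct (norm_pow_lt_one hq hd)).hasProd.map (powMonoidHom k)
      (continuous_pow k)

theorem eulerProduct_pow_pos (hq : ‖q‖ < 1) {d : ℕ} (hd : d ≠ 0) : 0 < eulerProduct (q ^ d) :=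
  eulerProduct_pos (norm_pow_lt_one hq hd)

theorem U3_eq_eulerProduct (hq : ‖q‖ < 1) :
    U3 q = eulerProduct q ^ 6 * eulerProduct (q ^ 6) ^ 8 / eulerProduct (q ^ 3) ^ 10 := by
  have h := ((hasProd_one_sub_pow_pow hq one_ne_zero 6).mul
    (hasProd_one_sub_pow_pow hq (d := 6) (by norm_num) 8)).div₀
    (hasProd_one_sub_pow_pow hq three_ne_zero 10)
    (pow_ne_zero _ (eulerProduct_pow_pos hq three_ne_zero).ne')
  simpa only [U3, pow_one, one_mul] using h.tprod_eq

theorem V3_eq_eulerProduct (hq : ‖q‖ < 1) :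
    V3 q = q * (eulerProduct q ^ 3 * eulerProduct (q ^ 6) ^ 9 /
      (eulerProduct (q ^ 2) ^ 3 * eulerProduct (q ^ 3) ^ 9)) := by
  have h₂ := eulerProduct_pow_pos hq two_ne_zero
  have h₃ := eulerProduct_pow_pos hq three_ne_zero
  have h := ((hasProd_one_sub_pow_pow hq one_ne_zero 3).mul
    (hasProd_one_sub_pow_pow hq (d := 6) (by norm_num) 9)).div₀
    ((hasProd_one_sub_pow_pow hq two_ne_zero 3).mul (hasProd_one_sub_pow_pow hq three_ne_zero 9))
    (by positivity)
  simpa only [V3, pow_one, one_mul] using congrArg (q * ·) h.tprod_eq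

theorem one_add_V3_eq_eulerProduct (hq0 : q ≠ 0) (hq : ‖q‖ < 1) :
    1 + V3 q = eulerProduct (q ^ 2) ^ 5 * eulerProduct (q ^ 6) /
      (eulerProduct q * eulerProduct (q ^ 3) ^ 5) := by
  have h₁ := eulerProduct_pos hq
  have h₂ := eulerProduct_pow_pos hq two_ne_zero
  have h₃ := eulerProduct_pow_pos hq three_ne_zero
  rw [V3_eq_eulerProduct hq]
  field_simp
  linear_combination eulerProduct_level_six hq0 hq

theorem continuousOn_eulerProduct_pow {d : ℕ} (hd : d ≠ 0) :
    ContinuousOn (fun q : ℝ ↦ eulerProduct (q ^ d)) (Metric.ball 0 1) := by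
  have h : ContinuousOn (eulerProduct : ℝ → ℝ) (Metric.ball 0 1) := fun q hq ↦
    (hasDerivAt_eulerProduct (mem_ball_zero_iff.1 hq)).continuousAt.continuousWithinAt
  refine h.comp (continuous_pow d).continuousOn fun q hq ↦ ?_
  rw [mem_ball_zero_iff] at hq ⊢
  exact norm_pow_lt_one hq hd

theorem continuousOn_U3 : ContinuousOn U3 (Metric.ball 0 1) := by
  have h₁ := continuousOn_eulerProduct_pow one_ne_zero
  have h₃ := continuousOn_eulerProduct_pow three_ne_zero
  have h₆ := continuousOn_eulerProduct_pow (d := 6) (by norm_num)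
  simp only [pow_one] at h₁
  exact (((h₁.pow 6).mul (h₆.pow 8)).div (h₃.pow 10) fun q hq ↦ pow_ne_zero _
    (eulerProduct_pow_pos (mem_ball_zero_iff.1 hq) three_ne_zero).ne').congr
    fun q hq ↦ U3_eq_eulerProduct (mem_ball_zero_iff.1 hq)

theorem continuousOn_V3 : ContinuousOn V3 (Metric.ball 0 1) := by
  have h₁ := continuousOn_eulerProduct_pow one_ne_zero
  have h₂ := continuousOn_eulerProduct_pow two_ne_zero
  have h₃ := continuousOn_eulerProduct_pow three_ne_zero
  have h₆ := continuousOn_eulerProduct_pow (d := 6) (by norm_num)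
  simp only [pow_one] at h₁
  refine (continuousOn_id.mul (((h₁.pow 3).mul (h₆.pow 9)).div ((h₂.pow 3).mul (h₃.pow 9))
    fun q hq ↦ ?_)).congr fun q hq ↦ V3_eq_eulerProduct (mem_ball_zero_iff.1 hq)
  have hpos₂ := eulerProduct_pow_pos (mem_ball_zero_iff.1 hq) two_ne_zero
  have hpos₃ := eulerProduct_pow_pos (mem_ball_zero_iff.1 hq) three_ne_zero
  exact (mul_pos (pow_pos hpos₂ 3) (pow_pos hpos₃ 9)).ne'

/-- The Hauptmodul `η(τ)⁹ η(6τ)³ / (η(2τ)⁹ η(3τ)³)` of `Γ₀(6)` in terms of `q = exp (2πiτ)`; the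
powers of `q` cancel. It is eight times the image of `V3` under the Fricke involution
`τ ↦ -1 / (6τ)`. -/
noncomputable def frickeV3 (q : ℝ) : ℝ :=
  eulerProduct q ^ 9 * eulerProduct (q ^ 6) ^ 3 /
    (eulerProduct (q ^ 2) ^ 9 * eulerProduct (q ^ 3) ^ 3)

theorem frickeV3_pos (hq : ‖q‖ < 1) : 0 < frickeV3 q := by
  have h₁ := eulerProduct_pos hq
  have h₂ := eulerProduct_pow_pos hq two_ne_zero
  have h₃ := eulerProduct_pow_pos hq three_ne_zero
  have h₆ := eulerProduct_pow_pos hq (d := 6) (by norm_num)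
  unfold frickeV3
  positivity

theorem hasDerivAt_frickeV3 (hq0 : q ≠ 0) (hq : ‖q‖ < 1) :
    HasDerivAt frickeV3 (-9 * frickeV3 q * (eulerProduct (q ^ 3) ^ 3 * eulerProduct (q ^ 6) ^ 3 /
      (eulerProduct q * eulerProduct (q ^ 2)))) q := by
  have h₁ := eulerProduct_pos hq
  have h₂ := eulerProduct_pow_pos hq two_ne_zero
  have h₃ := eulerProduct_pow_pos hq three_ne_zero
  have h₆ := eulerProduct_pow_pos hq (d := 6) (by norm_num)
  have hkoebe : eulerProduct (q ^ 3) ^ 3 * eulerProduct (q ^ 6) ^ 3 /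
      (eulerProduct q * eulerProduct (q ^ 2)) =
      (koebeSum q q - 2 * koebeSum (q ^ 2) (q ^ 2) - koebeSum (q ^ 3) (q ^ 3) +
        2 * koebeSum (q ^ 6) (q ^ 6)) / q := by
    rw [div_eq_div_iff (by positivity) hq0]
    linear_combination -eulerProduct_mul_koebeSum_level_six hq0 hq
  have hderiv {d : ℕ} (hd : d ≠ 0) (k : ℕ) := (hasDerivAt_eulerProduct_pow hd hq hq0).fun_pow k
  have h := ((hasDerivAt_eulerProduct_koebeSum hq hq0).fun_pow 9).fun_mul
    (hderiv (d := 6) (by norm_num) 3)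
      |>.fun_div ((hderiv two_ne_zero 9).fun_mul (hderiv three_ne_zero 3)) (by positivity)
  refine HasDerivAt.congr_deriv (f := frickeV3) h ?_
  rw [hkoebe, frickeV3]
  push_cast
  field

end EtaQuotients

section ImaginaryAxis

/-- The local parameter `q = exp (2πiτ)` at the point `τ = i s` of the imaginary axis. -/
noncomputable def qParamIm (s : ℝ) : ℝ := exp (-(2 * π * s))

/-- The Dedekind eta function at the point `τ = i s` of the imaginary axis, where it is real. -/
noncomputable def etaIm (s : ℝ) : ℝ := exp (-(π * s / 12)) * eulerProduct (qParamIm s)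

variable {s t : ℝ}

theorem qParamIm_pos (s : ℝ) : 0 < qParamIm s := exp_pos _

theorem norm_qParamIm_lt_one (hs : 0 < s) : ‖qParamIm s‖ < 1 := by
  rw [norm_of_nonneg (qParamIm_pos s).le, qParamIm, exp_lt_one_iff, neg_lt_zero]
  positivity

theorem exists_qParamIm_eq {q : ℝ} (hq0 : 0 < q) (hq1 : q < 1) : ∃ s, 0 < s ∧ qParamIm s = q := by
  refine ⟨-log q / (2 * π), div_pos (neg_pos.2 (log_neg hq0 hq1)) (by positivity), ?_⟩
  rw [qParamIm, mul_div_cancel₀ _ (by positivity), neg_neg, exp_log hq0]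

theorem exp_neg_pow_twentyFour (s : ℝ) : exp (-(π * s / 12)) ^ 24 = qParamIm s := by
  rw [qParamIm, ← exp_nat_mul]
  congr 1
  push_cast
  ring

theorem etaIm_natCast_mul (d : ℕ) (s : ℝ) :
    etaIm (d * s) = exp (-(π * s / 12)) ^ d * eulerProduct (qParamIm s ^ d) := by
  rw [etaIm, qParamIm, qParamIm, ← exp_nat_mul, ← exp_nat_mul]
  congr 2 <;> ring_nf

theorem etaIm_pos (hs : 0 < s) : 0 < etaIm s :=
  mul_pos (exp_pos _) (eulerProduct_pos (norm_qParamIm_lt_one hs))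

theorem eta_mul_I (hs : 0 < s) : ModularForm.eta (s * Complex.I) = etaIm s := by
  have hterm (n : ℕ) : 1 - ModularForm.eta_q n (s * Complex.I) =
      Complex.ofRealHom (1 - qParamIm s ^ (n + 1)) := by
    rw [ModularForm.eta_q_eq_pow, qParamIm]
    push_cast [Complex.ofRealHom_eq_coe]
    congr 3
    linear_combination (2 * π * s : ℂ) * Complex.I_mul_I
  have hprod := (multipliable_eulerProduct (norm_qParamIm_lt_one hs)).map_tprod Complex.ofRealHom
    Complex.continuous_ofReal
  rw [ModularForm.eta, tprod_congr hterm, ← hprod, ← eulerProduct_eq_tprod, etaIm,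
    Complex.ofReal_mul, Function.Periodic.qParam, Complex.ofRealHom_eq_coe]
  push_cast
  congr 2
  linear_combination (π * s / 12 : ℂ) * Complex.I_mul_I

theorem csqrt_ofReal_mul (hs : 0 < s) {z : ℂ} (hz : z ≠ 0) :
    Complex.sqrt (s * z) = √s * Complex.sqrt z := by
  have hs0 : (s : ℂ) ≠ 0 := mod_cast hs.ne'
  rw [sqrt_eq_exp (mul_ne_zero hs0 hz), sqrt_eq_exp hz, Complex.log_ofReal_mul hs hz, add_div,
    Complex.exp_add, sqrt_eq_rpow, rpow_def_of_pos hs]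
  push_cast
  ring_nf

theorem etaIm_inv (hs : 0 < s) : etaIm s⁻¹ = √s * etaIm s := by
  have hmem : s * Complex.I ∈ UpperHalfPlane.upperHalfPlaneSet := by
    simpa [UpperHalfPlane.upperHalfPlaneSet] using hs
  have hinv : -1 / (s * Complex.I) = (s⁻¹ : ℝ) * Complex.I := by
    simp [neg_div, mul_comm]
  have hI : Complex.sqrt Complex.I ≠ 0 := by simp [Complex.sqrt]
  have h := ModularForm.eta_comp_eq_csqrt_I_inv hmem
  simp only [Function.comp, Pi.smul_apply, Pi.mul_apply, smul_eq_mul] at h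
  rw [hinv, eta_mul_I (inv_pos.2 hs), eta_mul_I hs, csqrt_ofReal_mul hs Complex.I_ne_zero] at h
  have : (etaIm s⁻¹ : ℂ) = (√s * etaIm s : ℝ) := by
    rw [h]
    push_cast
    field_simp
  exact_mod_cast this

theorem etaIm_of_mul_eq_one (hs : 0 < s) (h : t * s = 1) : etaIm t = √s * etaIm s := by
  rw [eq_inv_of_mul_eq_one_left h, etaIm_inv hs]

theorem etaIm_sq_of_mul_eq_one (hs : 0 < s) (h : t * s = 1) : etaIm t ^ 2 = s * etaIm s ^ 2 := by
  rw [etaIm_of_mul_eq_one hs h, mul_pow, sq_sqrt hs.le]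

theorem V3_qParamIm (hs : 0 < s) :
    V3 (qParamIm s) =
      etaIm s ^ 3 * etaIm (6 * s) ^ 9 / (etaIm (2 * s) ^ 3 * etaIm (3 * s) ^ 9) := by
  have hq := norm_qParamIm_lt_one hs
  have h₂ := eulerProduct_pow_pos hq two_ne_zero
  have h₃ := eulerProduct_pow_pos hq three_ne_zero
  have e₂ := etaIm_natCast_mul 2 s
  have e₃ := etaIm_natCast_mul 3 s
  have e₆ := etaIm_natCast_mul 6 s
  push_cast at e₂ e₃ e₆
  rw [V3_eq_eulerProduct hq, e₂, e₃, e₆, etaIm]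
  nth_rw 1 [← exp_neg_pow_twentyFour]
  field

theorem one_add_V3_qParamIm (hs : 0 < s) :
    1 + V3 (qParamIm s) =
      etaIm (2 * s) ^ 5 * etaIm (6 * s) / (etaIm s * etaIm (3 * s) ^ 5) := by
  have hq := norm_qParamIm_lt_one hs
  have h₁ := eulerProduct_pos hq
  have h₃ := eulerProduct_pow_pos hq three_ne_zero
  have e₂ := etaIm_natCast_mul 2 s
  have e₃ := etaIm_natCast_mul 3 s
  have e₆ := etaIm_natCast_mul 6 s
  push_cast at e₂ e₃ e₆
  rw [one_add_V3_eq_eulerProduct (qParamIm_pos s).ne' hq, e₂, e₃, e₆, etaIm]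
  field

theorem frickeV3_qParamIm (hs : 0 < s) :
    frickeV3 (qParamIm s) =
      etaIm s ^ 9 * etaIm (6 * s) ^ 3 / (etaIm (2 * s) ^ 9 * etaIm (3 * s) ^ 3) := by
  have hq := norm_qParamIm_lt_one hs
  have h₂ := eulerProduct_pow_pos hq two_ne_zero
  have h₃ := eulerProduct_pow_pos hq three_ne_zero
  have e₂ := etaIm_natCast_mul 2 s
  have e₃ := etaIm_natCast_mul 3 s
  have e₆ := etaIm_natCast_mul 6 s
  push_cast at e₂ e₃ e₆
  rw [frickeV3, e₂, e₃, e₆, etaIm]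
  field

end ImaginaryAxis

section FrickeInvolution

variable {q s t : ℝ}

theorem etaIm_three_mul_of_mul_eq_one (hs : 0 < s) (h : 6 * t * s = 1) :
    etaIm (3 * t) = √2 * √s * etaIm (2 * s) := by
  rw [etaIm_of_mul_eq_one (s := 2 * s) (by positivity) (by linear_combination h),
    sqrt_mul zero_le_two]

theorem etaIm_two_mul_of_mul_eq_one (hs : 0 < s) (h : 6 * t * s = 1) :
    etaIm (2 * t) = √3 * √s * etaIm (3 * s) := by
  rw [etaIm_of_mul_eq_one (s := 3 * s) (by positivity) (by linear_combination h),
    sqrt_mul zero_le_three]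

theorem etaIm_self_of_mul_eq_one (hs : 0 < s) (h : 6 * t * s = 1) :
    etaIm t = √2 * √3 * √s * etaIm (6 * s) := by
  rw [etaIm_of_mul_eq_one (s := 6 * s) (by positivity) (by linear_combination h),
    ← sqrt_mul zero_le_two, ← sqrt_mul (by norm_num)]
  norm_num

theorem V3_qParamIm_of_mul_eq_one (hs : 0 < s) (h : 6 * t * s = 1) :
    V3 (qParamIm t) = frickeV3 (qParamIm s) / 8 := by
  have ht : 0 < t := by nlinarith
  have h₂ := etaIm_pos (s := 2 * s) (by positivity)
  have h₃ := etaIm_pos (s := 3 * s) (by positivity)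
  have height : √2 ^ 6 = 8 := by
    rw [show √2 ^ 6 = (√2 ^ 2) ^ 3 by ring, sq_sqrt zero_le_two]
    norm_num
  rw [V3_qParamIm ht, frickeV3_qParamIm hs, etaIm_self_of_mul_eq_one hs h,
    etaIm_two_mul_of_mul_eq_one hs h, etaIm_three_mul_of_mul_eq_one hs h,
    etaIm_of_mul_eq_one hs h, ← height]
  field

theorem one_add_V3_mul_one_add_V3 (hs : 0 < s) (h : 6 * t * s = 1) :
    (1 + V3 (qParamIm s)) * (1 + V3 (qParamIm t)) = 9 / 8 := by
  have ht : 0 < t := by nlinarith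
  have h₁ := etaIm_pos hs
  have h₂ := etaIm_pos (s := 2 * s) (by positivity)
  have h₃ := etaIm_pos (s := 3 * s) (by positivity)
  have h₆ := etaIm_pos (s := 6 * s) (by positivity)
  have hratio : √3 ^ 4 / √2 ^ 6 = 9 / 8 := by
    rw [show √3 ^ 4 = (√3 ^ 2) ^ 2 by ring, show √2 ^ 6 = (√2 ^ 2) ^ 3 by ring,
      sq_sqrt zero_le_two, sq_sqrt zero_le_three]
    norm_num
  rw [one_add_V3_qParamIm hs, one_add_V3_qParamIm ht, etaIm_self_of_mul_eq_one hs h,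
    etaIm_two_mul_of_mul_eq_one hs h, etaIm_three_mul_of_mul_eq_one hs h,
    etaIm_of_mul_eq_one hs h, ← hratio]
  field

theorem one_add_V3_mul_eight_add_frickeV3 (hq0 : 0 < q) (hq1 : q < 1) :
    (1 + V3 q) * (8 + frickeV3 q) = 9 := by
  obtain ⟨s, hs, rfl⟩ := exists_qParamIm_eq hq0 hq1
  have hst : 6 * (6 * s)⁻¹ * s = 1 := by field
  have h := one_add_V3_mul_one_add_V3 hs hst
  rw [V3_qParamIm_of_mul_eq_one hs hst] at h
  linear_combination 8 * h

theorem V3_eq_nine_div_sub_one (hq0 : 0 < q) (hq1 : q < 1) :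
    V3 q = 9 / (8 + frickeV3 q) - 1 := by
  have hpos := frickeV3_pos (q := q) (by rwa [norm_of_nonneg hq0.le])
  rw [← one_add_V3_mul_eight_add_frickeV3 hq0 hq1]
  field

theorem U3_eq_one_add_V3_sq_mul (hq0 : q ≠ 0) (hq : ‖q‖ < 1) :
    U3 q = (1 + V3 q) ^ 2 * (frickeV3 q * (eulerProduct (q ^ 3) ^ 3 * eulerProduct (q ^ 6) ^ 3 /
      (eulerProduct q * eulerProduct (q ^ 2)))) := by
  have h₁ := eulerProduct_pos hq
  have h₂ := eulerProduct_pow_pos hq two_ne_zero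
  have h₃ := eulerProduct_pow_pos hq three_ne_zero
  rw [one_add_V3_eq_eulerProduct hq0 hq, U3_eq_eulerProduct hq, frickeV3]
  field

theorem hasDerivAt_V3 (hq0 : 0 < q) (hq1 : q < 1) : HasDerivAt V3 (U3 q) q := by
  have hq : ‖q‖ < 1 := by rwa [norm_of_nonneg hq0.le]
  have hpos := frickeV3_pos hq
  have hV : V3 =ᶠ[𝓝 q] fun z ↦ 9 / (8 + frickeV3 z) - 1 :=
    eventually_of_mem (Ioo_mem_nhds hq0 hq1) fun z hz ↦ V3_eq_nine_div_sub_one hz.1 hz.2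
  have h := ((hasDerivAt_const q (9 : ℝ)).fun_div ((hasDerivAt_frickeV3 hq0.ne' hq).const_add 8)
    (by positivity)).sub_const 1
  refine (h.congr_of_eventuallyEq hV).congr_deriv ?_
  rw [U3_eq_one_add_V3_sq_mul hq0.ne' hq, V3_eq_nine_div_sub_one hq0 hq1, add_sub_cancel]
  field

theorem integral_U3 (hq0 : 0 < q) (hq1 : q < 1) : ∫ t in (0 : ℝ)..q, U3 t = V3 q := by
  have hsub : Set.Icc 0 q ⊆ Metric.ball 0 1 := fun t ht ↦ by
    rw [mem_ball_zero_iff, norm_of_nonneg ht.1]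
    exact ht.2.trans_lt hq1
  have hint : IntervalIntegrable U3 MeasureTheory.volume 0 q :=
    (continuousOn_U3.mono hsub).intervalIntegrable_of_Icc hq0.le
  rw [intervalIntegral.integral_eq_sub_of_hasDerivAt_of_le hq0.le (continuousOn_V3.mono hsub)
    (fun t ht ↦ hasDerivAt_V3 ht.1 (ht.2.trans hq1)) hint]
  simp [V3]

end FrickeInvolution

section SpecialValues

variable {s : ℝ}

theorem V3_qParamIm_pos (hs : 0 < s) : 0 < V3 (qParamIm s) := by
  have h₁ := etaIm_pos hs
  have h₂ := etaIm_pos (s := 2 * s) (by positivity)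
  have h₃ := etaIm_pos (s := 3 * s) (by positivity)
  have h₆ := etaIm_pos (s := 6 * s) (by positivity)
  rw [V3_qParamIm hs]
  positivity

theorem one_sub_eight_mul_V3_qParamIm (hs : 0 < s) :
    1 - 8 * V3 (qParamIm s) =
      etaIm s ^ 8 * etaIm (6 * s) ^ 4 / (etaIm (2 * s) ^ 4 * etaIm (3 * s) ^ 8) := by
  have h₁ := etaIm_pos hs
  have h₂ := etaIm_pos (s := 2 * s) (by positivity)
  have h₃ := etaIm_pos (s := 3 * s) (by positivity)
  calc 1 - 8 * V3 (qParamIm s) = (1 + V3 (qParamIm s)) * frickeV3 (qParamIm s) := by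
        have hq1 := (le_norm_self _).trans_lt (norm_qParamIm_lt_one hs)
        linear_combination -one_add_V3_mul_eight_add_frickeV3 (qParamIm_pos s) hq1
    _ = _ := by
        rw [one_add_V3_qParamIm hs, frickeV3_qParamIm hs]
        field

theorem one_sub_eight_mul_V3_qParamIm_pos (hs : 0 < s) : 0 < 1 - 8 * V3 (qParamIm s) := by
  have h₁ := etaIm_pos hs
  have h₂ := etaIm_pos (s := 2 * s) (by positivity)
  have h₃ := etaIm_pos (s := 3 * s) (by positivity)
  have h₆ := etaIm_pos (s := 6 * s) (by positivity)
  rw [one_sub_eight_mul_V3_qParamIm hs]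
  positivity

theorem exp_neg_two_pi_div_sqrt (x : ℝ) : exp (-2 * π / √x) = qParamIm (√x)⁻¹ := by
  rw [qParamIm]
  ring_nf

theorem V3_exp_neg_two_pi_div_sqrt_six : V3 (exp (-2 * π / √6)) = (3 * √2 - 4) / 4 := by
  have hs : 0 < (√6)⁻¹ := by positivity
  have h := one_add_V3_mul_one_add_V3 hs (t := (√6)⁻¹) (by field_simp; norm_num)
  have hpos := V3_qParamIm_pos hs
  have hsq : √2 ^ 2 = 2 := sq_sqrt zero_le_two
  rw [exp_neg_two_pi_div_sqrt]
  have hroot : 1 + V3 (qParamIm (√6)⁻¹) = 3 / 4 * √2 :=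
    (sq_eq_sq₀ (by positivity) (by positivity)).1 (by linear_combination h - 9 / 16 * hsq)
  linear_combination hroot

theorem V3_mul_etaIm_pow_twelve (hs : 0 < s) :
    V3 (qParamIm s) * etaIm s ^ 12 =
      (1 - 8 * V3 (qParamIm s)) ^ 2 * (1 + V3 (qParamIm s)) * etaIm (3 * s) ^ 12 := by
  have h₁ := etaIm_pos hs
  have h₂ := etaIm_pos (s := 2 * s) (by positivity)
  have h₃ := etaIm_pos (s := 3 * s) (by positivity)
  rw [one_sub_eight_mul_V3_qParamIm hs, one_add_V3_qParamIm hs, V3_qParamIm hs]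
  field

theorem V3_mul_etaIm_pow_twentyFour (hs : 0 < s) :
    V3 (qParamIm s) * (1 + V3 (qParamIm s)) ^ 3 * etaIm s ^ 24 =
      (1 - 8 * V3 (qParamIm s)) ^ 3 * etaIm (2 * s) ^ 24 := by
  have h₁ := etaIm_pos hs
  have h₂ := etaIm_pos (s := 2 * s) (by positivity)
  have h₃ := etaIm_pos (s := 3 * s) (by positivity)
  rw [one_sub_eight_mul_V3_qParamIm hs, one_add_V3_qParamIm hs, V3_qParamIm hs]
  field

theorem V3_exp_neg_two_pi_div_sqrt_three : V3 (exp (-2 * π / √3)) = (√3 - 1) ^ 3 / 16 := by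
  have hsq : √3 ^ 2 = 3 := sq_sqrt zero_le_three
  rw [exp_neg_two_pi_div_sqrt]
  set s := (√3)⁻¹ with hsdef
  have hs : 0 < s := by positivity
  have hs2 : 3 * s ^ 2 = 1 := by rw [hsdef, inv_pow, hsq]; norm_num
  have heta : etaIm s ^ 12 = 27 * etaIm (3 * s) ^ 12 :=
    calc etaIm s ^ 12 = (etaIm s ^ 2) ^ 6 := by ring
      _ = (3 * s * etaIm (3 * s) ^ 2) ^ 6 := by
        rw [etaIm_sq_of_mul_eq_one (by positivity) (by linear_combination hs2 : s * (3 * s) = 1)]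
      _ = 27 * (3 * s ^ 2) ^ 3 * etaIm (3 * s) ^ 12 := by ring
      _ = 27 * etaIm (3 * s) ^ 12 := by rw [hs2]; ring
  have hV := V3_mul_etaIm_pow_twelve hs
  have hpos := V3_qParamIm_pos hs
  have hpos' := one_sub_eight_mul_V3_qParamIm_pos hs
  set x := V3 (qParamIm s)
  have hcubic : 27 * x = (1 - 8 * x) ^ 2 * (1 + x) :=
    mul_right_cancel₀ (pow_pos (etaIm_pos (s := 3 * s) (by positivity)) 12).ne'
      (by linear_combination hV - x * heta)
  have hroot : x + 5 / 8 = 3 / 8 * √3 :=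
    (sq_eq_sq₀ (by positivity) (by positivity)).1 <| mul_left_cancel₀
      (by linarith : 2 * x - 1 ≠ 0)
      (by linear_combination -hcubic / 32 - 9 / 64 * (2 * x - 1) * hsq)
  linear_combination hroot + (3 - √3) / 16 * hsq

theorem V3_exp_neg_two_pi_div_sqrt_two : V3 (exp (-2 * π / √2)) = (√6 - 2) ^ 3 / 8 := by
  have hsq : √6 ^ 2 = 6 := sq_sqrt (by norm_num)
  rw [exp_neg_two_pi_div_sqrt]
  set s := (√2)⁻¹ with hsdef
  have hs : 0 < s := by positivity
  have hs2 : 2 * s ^ 2 = 1 := by rw [hsdef, inv_pow, sq_sqrt zero_le_two]; norm_num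
  have heta : etaIm s ^ 24 = 64 * etaIm (2 * s) ^ 24 :=
    calc etaIm s ^ 24 = (etaIm s ^ 2) ^ 12 := by ring
      _ = (2 * s * etaIm (2 * s) ^ 2) ^ 12 := by
        rw [etaIm_sq_of_mul_eq_one (by positivity) (by linear_combination hs2 : s * (2 * s) = 1)]
      _ = 64 * (2 * s ^ 2) ^ 6 * etaIm (2 * s) ^ 24 := by ring
      _ = 64 * etaIm (2 * s) ^ 24 := by rw [hs2]; ring
  have hV := V3_mul_etaIm_pow_twentyFour hs
  have hpos := V3_qParamIm_pos hs
  set x := V3 (qParamIm s)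
  have hquartic : 64 * (x * (1 + x) ^ 3) = (1 - 8 * x) ^ 3 :=
    mul_right_cancel₀ (pow_pos (etaIm_pos (s := 2 * s) (by positivity)) 24).ne'
      (by linear_combination hV - x * (1 + x) ^ 3 * heta)
  have hroot : x + 11 / 2 = 9 / 4 * √6 :=
    (sq_eq_sq₀ (by positivity) (by positivity)).1 <| mul_left_cancel₀
      (by positivity : 8 * x ^ 2 + 1 ≠ 0)
      (by linear_combination hquartic / 8 - 81 / 16 * (8 * x ^ 2 + 1) * hsq)
  linear_combination hroot + (6 - √6) / 8 * hsq

end SpecialValues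

theorem stmt_3 :
    (∀ q : ℝ, 0 < q → q < 1 → (∫ t in (0:ℝ)..q, U3 t) = V3 q) ∧
    V3 (Real.exp (-2 * Real.pi / Real.sqrt 6)) = (3 * Real.sqrt 2 - 4) / 4 ∧
    V3 (Real.exp (-2 * Real.pi / Real.sqrt 3)) = (Real.sqrt 3 - 1) ^ 3 / 16 ∧
    V3 (Real.exp (-2 * Real.pi / Real.sqrt 2)) = (Real.sqrt 6 - 2) ^ 3 / 8 := by
  exact ⟨fun q ↦ integral_U3, V3_exp_neg_two_pi_div_sqrt_six, V3_exp_neg_two_pi_div_sqrt_three,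
    V3_exp_neg_two_pi_div_sqrt_two⟩
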